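/- arXiv:0909.0800 — 6 statements merged into one kernel-verified Lean document; each statement's English description precedes it below -/
import Mathlib

section
/- Let M_{0,0}, M_{1,0} : U → Mat_{m×m}(ℂ) be twice continuously differentiable functions on an open subset U ⊆ ℝ^N such that ∂_k M_{1,0} = M_{0,0}·(∂_k M_{0,0}) for every k ∈ {1,…,N}. Then M_{0,0} is a solution of the commutativity equation dM ∧ dM = 0: for all i, j ∈ {1,…,N} and at every point of U, the matrices ∂_i M_{0,0} and ∂_j M_{0,0} commute. -/
/-!
Differentiating the master equation `∂ⱼ M₁₀ = M₀₀ · ∂ⱼ M₀₀` in the `i`-th direction gives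
`∂ᵢ∂ⱼ M₁₀ = ∂ᵢ M₀₀ · ∂ⱼ M₀₀ + M₀₀ · ∂ᵢ∂ⱼ M₀₀` (Leibniz rule, `pderM_mul`). Second partial derivatives
of C² functions are symmetric (`pderM_comm`), so exchanging `i` and `j` and cancelling the symmetric
terms leaves `∂ᵢ M₀₀ · ∂ⱼ M₀₀ = ∂ⱼ M₀₀ · ∂ᵢ M₀₀`.
-/

/-- The `k`-th partial derivative of a matrix-valued function on `ℝ^N`,
taken entrywise (`fderiv` applied to the `k`-th standard basis vector). -/
noncomputable def pderM {N m : ℕ} (k : Fin N)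
    (M : (Fin N → ℝ) → Matrix (Fin m) (Fin m) ℂ) (x : Fin N → ℝ) :
    Matrix (Fin m) (Fin m) ℂ :=
  Matrix.of fun i j => fderiv ℝ (fun y => M y i j) x (Pi.single k 1)

theorem pderM_congr {N m : ℕ} (k : Fin N) {A B : (Fin N → ℝ) → Matrix (Fin m) (Fin m) ℂ}
    {x : Fin N → ℝ} (h : A =ᶠ[nhds x] B) : pderM k A x = pderM k B x := by
  ext a b
  have hab : (fun y => A y a b) =ᶠ[nhds x] fun y => B y a b := h.mono fun y hy => by simp [hy]
  simp only [pderM, Matrix.of_apply, hab.fderiv_eq]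

theorem pderM_mul {N m : ℕ} (k : Fin N) {A B : (Fin N → ℝ) → Matrix (Fin m) (Fin m) ℂ}
    {x : Fin N → ℝ} (hA : ∀ a b, DifferentiableAt ℝ (fun y => A y a b) x)
    (hB : ∀ a b, DifferentiableAt ℝ (fun y => B y a b) x) :
    pderM k (fun y => A y * B y) x = pderM k A x * B x + A x * pderM k B x := by
  ext a b
  simp only [pderM, Matrix.of_apply, Matrix.add_apply, Matrix.mul_apply]
  rw [fderiv_fun_sum fun c _ => (hA a c).fun_mul (hB c b), ← Finset.sum_add_distrib,
    ContinuousLinearMap.sum_apply]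
  refine Finset.sum_congr rfl fun c _ => ?_
  rw [fderiv_fun_mul (hA a c) (hB c b)]
  simp only [ContinuousLinearMap.add_apply, ContinuousLinearMap.smul_apply, smul_eq_mul]
  ring

theorem differentiableAt_fderiv_of_contDiffAt {N : ℕ} {f : (Fin N → ℝ) → ℂ} {x : Fin N → ℝ}
    (hf : ContDiffAt ℝ 2 f x) : DifferentiableAt ℝ (fderiv ℝ f) x :=
  (hf.fderiv_right (m := 1) (by norm_num)).differentiableAt (by norm_num)

theorem differentiableAt_pderM {N m : ℕ} (k : Fin N)
    {A : (Fin N → ℝ) → Matrix (Fin m) (Fin m) ℂ} {x : Fin N → ℝ}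
    (hA : ∀ a b, ContDiffAt ℝ 2 (fun y => A y a b) x) (a b : Fin m) :
    DifferentiableAt ℝ (fun y => pderM k A y a b) x := by
  simp only [pderM, Matrix.of_apply]
  exact (differentiableAt_fderiv_of_contDiffAt (hA a b)).clm_apply (differentiableAt_const _)

theorem pderM_comm {N m : ℕ} (i j : Fin N) {A : (Fin N → ℝ) → Matrix (Fin m) (Fin m) ℂ}
    {x : Fin N → ℝ} (hA : ∀ a b, ContDiffAt ℝ 2 (fun y => A y a b) x) :
    pderM i (pderM j A) x = pderM j (pderM i A) x := by
  ext a b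
  have hd := differentiableAt_fderiv_of_contDiffAt (hA a b)
  have hs : IsSymmSndFDerivAt ℝ (fun y => A y a b) x :=
    (hA a b).isSymmSndFDerivAt (by simp)
  simp only [pderM, Matrix.of_apply]
  rw [fderiv_clm_apply hd (differentiableAt_const _), fderiv_clm_apply hd (differentiableAt_const _)]
  simpa using hs.eq (Pi.single i 1) (Pi.single j 1)

/-- If `M₀₀, M₁₀ : U → Mat_{m×m}(ℂ)` are C² on an open `U ⊆ ℝ^N` and satisfy the
first master equation `∂ₖ M₁₀ = M₀₀ · ∂ₖ M₀₀`, then `M₀₀` solves the commutativity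
equation: all partial derivatives of `M₀₀` commute pairwise on `U`. -/
theorem commutativity_of_first_master_equation
    {m N : ℕ} (hm : 1 ≤ m) (hN : 1 ≤ N)
    (U : Set (Fin N → ℝ)) (hU : IsOpen U)
    (M00 M10 : (Fin N → ℝ) → Matrix (Fin m) (Fin m) ℂ)
    (hM00 : ∀ i j : Fin m, ContDiffOn ℝ 2 (fun x => M00 x i j) U)
    (hM10 : ∀ i j : Fin m, ContDiffOn ℝ 2 (fun x => M10 x i j) U)
    (hME : ∀ k : Fin N, ∀ x ∈ U, pderM k M10 x = M00 x * pderM k M00 x) :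
    ∀ i j : Fin N, ∀ x ∈ U,
      pderM i M00 x * pderM j M00 x = pderM j M00 x * pderM i M00 x := by
  intro i j x hx
  have hn : U ∈ nhds x := hU.mem_nhds hx
  have h0 : ∀ a b, ContDiffAt ℝ 2 (fun y => M00 y a b) x := fun a b => (hM00 a b).contDiffAt hn
  have h1 : ∀ a b, ContDiffAt ℝ 2 (fun y => M10 y a b) x := fun a b => (hM10 a b).contDiffAt hn
  have key : ∀ k l : Fin N, pderM k (pderM l M10) x =
      pderM k M00 x * pderM l M00 x + M00 x * pderM k (pderM l M00) x := fun k l => by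
    -- The master equation holds on a neighbourhood of `x`, so it may be differentiated at `x`.
    rw [pderM_congr k (Filter.eventually_of_mem hn (hME l))]
    exact pderM_mul k (fun a b => (h0 a b).differentiableAt (by norm_num))
      (differentiableAt_pderM l h0)
  have h := pderM_comm i j h1
  rw [key, key, pderM_comm i j h0] at h
  exact add_right_cancel h
end

section
/- Let (M_{a,b}) be a tower of matrix potentials on U, let r ∈ Mat_{m×m}(ℂ) and let l ≥ 1. Set N := (r z^{l−1} . M)_{0,0}, i.e. N = r·M_{l−1,0} − (−1)^{l−1}·M_{0,l−1}·r + Σ_{i+j=l−2, i,j≥0} (−1)^{i+1}·M_{0,i}·r·M_{j,0} (so N = r·M_{0,0} − M_{0,0}·r when l = 1). Then for every k ∈ {1,…,N}: ∂_k (r z^l . M)_{0,0} = N·(∂_k M_{0,0}) − (∂_k M_{0,0})·N. In particular, the differential of (r z^l . M)_{0,0} is a commutator with d M_{0,0}, so the infinitesimal upper-triangular action preserves the spectrum of d M_{0,0}. -/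
/-- The infinitesimal upper-triangular (Givental-type) action of `r·z^l` on a family
`(M_{a,b})`: `(r z^l . M)_{a,b} = r·M_{a+l,b} − (−1)^l·M_{a,b+l}·r
+ Σ_{i+j=l−1, i,j≥0} (−1)^{i+1}·M_{a,i}·r·M_{j,b}`. -/
noncomputable def upAct {N m : ℕ} (r : Matrix (Fin m) (Fin m) ℂ) (l : ℕ)
    (M : ℕ → ℕ → (Fin N → ℝ) → Matrix (Fin m) (Fin m) ℂ)
    (a b : ℕ) (x : Fin N → ℝ) : Matrix (Fin m) (Fin m) ℂ :=
  r * M (a + l) b x - (-1 : ℂ) ^ l • (M a (b + l) x * r)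
    + ∑ i ∈ Finset.range l, (-1 : ℂ) ^ (i + 1) • (M a i x * r * M (l - 1 - i) b x)

/-- `F` is entrywise (Fréchet) differentiable at `x`, and its `k`-th partial derivative there is the
matrix `F'`. Full differentiability is required since `pderM` is defined through `fderiv`. -/
def HasPderM {N m : ℕ} (k : Fin N) (F : (Fin N → ℝ) → Matrix (Fin m) (Fin m) ℂ)
    (F' : Matrix (Fin m) (Fin m) ℂ) (x : Fin N → ℝ) : Prop :=
  ∀ i j, ∃ L : (Fin N → ℝ) →L[ℝ] ℂ,
    HasFDerivAt (fun y => F y i j) L x ∧ L (Pi.single k 1) = F' i j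

namespace HasPderM

variable {N m : ℕ} {k : Fin N} {F G : (Fin N → ℝ) → Matrix (Fin m) (Fin m) ℂ}
  {F' G' : Matrix (Fin m) (Fin m) ℂ} {x : Fin N → ℝ}

theorem pderM_eq (h : HasPderM k F F' x) : pderM k F x = F' := by
  ext i j
  obtain ⟨L, hL, e⟩ := h i j
  simp only [pderM, Matrix.of_apply]
  rw [hL.fderiv, e]

theorem of_differentiableAt (h : ∀ i j, DifferentiableAt ℝ (fun y => F y i j) x) :
    HasPderM k F (pderM k F x) x :=
  fun i j => ⟨_, (h i j).hasFDerivAt, rfl⟩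

theorem const (C : Matrix (Fin m) (Fin m) ℂ) : HasPderM k (fun _ => C) 0 x :=
  fun i j => ⟨0, hasFDerivAt_const (C i j) x, rfl⟩

theorem add (hF : HasPderM k F F' x) (hG : HasPderM k G G' x) :
    HasPderM k (fun y => F y + G y) (F' + G') x := by
  intro i j
  obtain ⟨L, hL, e⟩ := hF i j
  obtain ⟨K, hK, e'⟩ := hG i j
  exact ⟨L + K, hL.add hK, by simp [e, e']⟩

theorem sum {ι : Type*} (s : Finset ι) {f : ι → (Fin N → ℝ) → Matrix (Fin m) (Fin m) ℂ}
    {f' : ι → Matrix (Fin m) (Fin m) ℂ} (h : ∀ i ∈ s, HasPderM k (f i) (f' i) x) :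
    HasPderM k (fun y => ∑ i ∈ s, f i y) (∑ i ∈ s, f' i) x := by
  classical
  induction s using Finset.induction_on with
  | empty => simpa using const (k := k) (x := x) (0 : Matrix (Fin m) (Fin m) ℂ)
  | insert a s ha ih =>
    simp only [Finset.sum_insert ha]
    exact (h a (Finset.mem_insert_self a s)).add
      (ih fun i hi => h i (Finset.mem_insert_of_mem hi))

theorem const_smul (c : ℂ) (hF : HasPderM k F F' x) :
    HasPderM k (fun y => c • F y) (c • F') x := by
  intro i j
  obtain ⟨L, hL, e⟩ := hF i j
  exact ⟨c • L, hL.const_smul c, by simp [e]⟩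

theorem sub (hF : HasPderM k F F' x) (hG : HasPderM k G G' x) :
    HasPderM k (fun y => F y - G y) (F' - G') x := by
  simpa [sub_eq_add_neg] using hF.add (hG.const_smul (-1))

theorem mul (hF : HasPderM k F F' x) (hG : HasPderM k G G' x) :
    HasPderM k (fun y => F y * G y) (F' * G x + F x * G') x := by
  intro i j
  choose L hL e using hF
  choose K hK e' using hG
  refine ⟨∑ p, (F x i p • K p j + G x p j • L i p), ?_, ?_⟩
  · simp only [Matrix.mul_apply]
    exact HasFDerivAt.fun_sum fun p _ => (hL i p).mul (hK p j)
  · simp only [_root_.sum_apply, _root_.add_apply,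
      _root_.smul_apply, e, e', Matrix.add_apply, Matrix.mul_apply, smul_eq_mul,
      ← Finset.sum_add_distrib]
    exact Finset.sum_congr rfl fun p _ => by ring

theorem const_mul (C : Matrix (Fin m) (Fin m) ℂ) (hF : HasPderM k F F' x) :
    HasPderM k (fun y => C * F y) (C * F') x := by
  simpa using (const C).mul hF

theorem mul_const (C : Matrix (Fin m) (Fin m) ℂ) (hF : HasPderM k F F' x) :
    HasPderM k (fun y => F y * C) (F' * C) x := by
  simpa using hF.mul (const C)

end HasPderM

/-- For a tower of matrix potentials, with `N := (r z^{l−1}.M)_{0,0}`, the differential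
of `(r z^l.M)_{0,0}` is the commutator `[N, dM_{0,0}]`; hence the infinitesimal
upper-triangular action preserves the spectrum of `dM_{0,0}`. -/
theorem upper_triangular_action_differential_is_commutator
    {m N : ℕ} (hm : 1 ≤ m) (hN : 1 ≤ N)
    (U : Set (Fin N → ℝ)) (hU : IsOpen U)
    (M : ℕ → ℕ → (Fin N → ℝ) → Matrix (Fin m) (Fin m) ℂ)
    (hsmooth : ∀ a b : ℕ, ∀ i j : Fin m, ContDiffOn ℝ 1 (fun x => M a b x i j) U)
    (hME1 : ∀ a b : ℕ, ∀ k : Fin N, ∀ x ∈ U,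
      pderM k (M (a + 1) b) x = M a 0 x * pderM k (M 0 b) x)
    (hME2 : ∀ a b : ℕ, ∀ k : Fin N, ∀ x ∈ U,
      pderM k (M a (b + 1)) x = pderM k (M a 0) x * M 0 b x)
    (hME3 : ∀ a b : ℕ, ∀ x ∈ U,
      M (a + 1) b x + M a (b + 1) x = M a 0 x * M 0 b x)
    (r : Matrix (Fin m) (Fin m) ℂ) (l : ℕ) (hl : 1 ≤ l)
    (Nmat : (Fin N → ℝ) → Matrix (Fin m) (Fin m) ℂ)
    (hNmat : ∀ x, Nmat x = upAct r (l - 1) M 0 0 x) :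
    ∀ k : Fin N, ∀ x ∈ U,
      pderM k (upAct r l M 0 0) x
        = Nmat x * pderM k (M 0 0) x - pderM k (M 0 0) x * Nmat x := by
  intro k x hx
  obtain ⟨n, rfl⟩ : ∃ n, l = n + 1 := ⟨l - 1, by omega⟩
  have hd : ∀ a b, HasPderM k (M a b) (pderM k (M a b) x) x := fun a b =>
    HasPderM.of_differentiableAt fun i j =>
      ((hsmooth a b i j).differentiableOn one_ne_zero).differentiableAt (hU.mem_nhds hx)
  have hA : ∀ j, pderM k (M (j + 1) 0) x = M j 0 x * pderM k (M 0 0) x :=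
    fun j => hME1 j 0 k x hx
  have hB : ∀ j, pderM k (M 0 (j + 1)) x = pderM k (M 0 0) x * M 0 j x :=
    fun j => hME2 0 j k x hx
  have key := (((hd (0 + (n + 1)) 0).const_mul r).sub
    (((hd 0 (0 + (n + 1))).mul_const r).const_smul ((-1 : ℂ) ^ (n + 1)))).add
    (HasPderM.sum (Finset.range (n + 1)) fun i _ =>
      (((hd 0 i).mul_const r).mul (hd (n + 1 - 1 - i) 0)).const_smul ((-1 : ℂ) ^ (i + 1)))
  refine (HasPderM.pderM_eq key).trans ?_
  rw [hNmat x]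
  simp only [upAct, Nat.add_sub_cancel, zero_add, hA, hB, smul_add, Finset.sum_add_distrib]
  set D := pderM k (M 0 0) x with hD
  -- The sum where `B_i` is differentiated: the term `i = 0` is split off, the others use `hB`.
  have h1 : ∑ i ∈ Finset.range (n + 1),
        (-1 : ℂ) ^ (i + 1) • (pderM k (M 0 i) x * r * M (n - i) 0 x)
      = -(D * (r * M n 0 x)) - D * ∑ i ∈ Finset.range n,
        (-1 : ℂ) ^ (i + 1) • (M 0 i x * r * M (n - 1 - i) 0 x) := by
    rw [Finset.sum_range_succ', Finset.mul_sum, sub_eq_add_neg, ← Finset.sum_neg_distrib,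
      add_comm]
    congr 1
    · simp [← hD, mul_assoc]
    · refine Finset.sum_congr rfl fun i _ => ?_
      rw [hB, show n - (i + 1) = n - 1 - i by omega, pow_succ _ (i + 1)]
      simp [mul_assoc]
  -- The sum where `A_{n-i}` is differentiated: the term `i = n` is split off, the others use `hA`.
  have h2 : ∑ i ∈ Finset.range (n + 1),
        (-1 : ℂ) ^ (i + 1) • (M 0 i x * r * pderM k (M (n - i) 0) x)
      = (∑ i ∈ Finset.range n,
        (-1 : ℂ) ^ (i + 1) • (M 0 i x * r * M (n - 1 - i) 0 x)) * D
        - (-1 : ℂ) ^ n • (M 0 n x * r) * D := by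
    rw [Finset.sum_range_succ, Finset.sum_mul, sub_eq_add_neg]
    congr 1
    · refine Finset.sum_congr rfl fun i hi => ?_
      have hin := Finset.mem_range.mp hi
      rw [show n - i = (n - 1 - i) + 1 by omega, hA]
      simp [mul_assoc]
    · simp [← hD, pow_succ]
  rw [h1, h2]
  simp only [add_mul, sub_mul, mul_add, mul_sub, smul_mul_assoc, mul_smul_comm, mul_assoc, pow_succ,
    mul_neg_one, neg_smul]
  abel
end

section
/- Let (M_{a,b}) be a tower of matrix potentials on U, let s ∈ Mat_{m×m}(ℂ) and l ≥ 1, and write M'_{a,b} := (s z^{−l} . M)_{a,b}. Then the linearized master equations hold: for all a, b ≥ 0 and all k ∈ {1,…,N}, (i) ∂_k M'_{a+1,b} = M'_{a,0}·(∂_k M_{0,b}) + M_{a,0}·(∂_k M'_{0,b}); (ii) ∂_k M'_{a,b+1} = (∂_k M'_{a,0})·M_{0,b} + (∂_k M_{a,0})·M'_{0,b}; (iii) M'_{a+1,b} + M'_{a,b+1} = M'_{a,0}·M_{0,b} + M_{a,0}·M'_{0,b}. That is, the infinitesimal lower-triangular action preserves the master equations. -/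
/-- The infinitesimal lower-triangular action of `s·z^{−l}` (`l ≥ 1`) on a family
`(M_{a,b})`: `(s z^{−l}.M)_{a,b} = s·M_{a−l,b} − (−1)^l·M_{a,b−l}·s
+ (−1)^b·[a+b+1 = l]·s`, with `M_{a,b} := 0` for negative indices. -/
noncomputable def lowAct {N m : ℕ} (s : Matrix (Fin m) (Fin m) ℂ) (l : ℕ)
    (M : ℕ → ℕ → (Fin N → ℝ) → Matrix (Fin m) (Fin m) ℂ)
    (a b : ℕ) (x : Fin N → ℝ) : Matrix (Fin m) (Fin m) ℂ :=
  (if l ≤ a then s * M (a - l) b x else 0)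
    - (-1 : ℂ) ^ l • (if l ≤ b then M a (b - l) x * s else 0)
    + (-1 : ℂ) ^ b • (if a + b + 1 = l then s else 0)

section PartialDerivatives

variable {N m : ℕ} {k : Fin N} {x : Fin N → ℝ} {F G : (Fin N → ℝ) → Matrix (Fin m) (Fin m) ℂ}

lemma pderM_const (k : Fin N) (x : Fin N → ℝ) (C : Matrix (Fin m) (Fin m) ℂ) :
    pderM k (fun _ => C) x = 0 := by
  ext i j
  simp [pderM]

lemma pderM_const_mul (s : Matrix (Fin m) (Fin m) ℂ)
    (hF : ∀ i j, DifferentiableAt ℝ (fun y => F y i j) x) :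
    pderM k (fun y => s * F y) x = s * pderM k F x := by
  ext i j
  simp only [pderM, Matrix.mul_apply, Matrix.of_apply]
  rw [fderiv_fun_sum fun p _ => (hF p j).const_mul (s i p)]
  simp [fderiv_const_mul (hF _ j)]

lemma pderM_mul_const (s : Matrix (Fin m) (Fin m) ℂ)
    (hF : ∀ i j, DifferentiableAt ℝ (fun y => F y i j) x) :
    pderM k (fun y => F y * s) x = pderM k F x * s := by
  ext i j
  simp only [pderM, Matrix.mul_apply, Matrix.of_apply]
  rw [fderiv_fun_sum fun p _ => (hF i p).mul_const (s p j)]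
  simp [fderiv_mul_const (hF i _), mul_comm]

/-- The form of `pderM` linearity matching the three summands of `lowAct`. -/
lemma pderM_sub_smul_add_const (c : ℂ) (C : Matrix (Fin m) (Fin m) ℂ)
    (hF : ∀ i j, DifferentiableAt ℝ (fun y => F y i j) x)
    (hG : ∀ i j, DifferentiableAt ℝ (fun y => G y i j) x) :
    pderM k (fun y => F y - c • G y + C) x = pderM k F x - c • pderM k G x := by
  ext i j
  simp only [pderM, Matrix.add_apply, Matrix.sub_apply, Matrix.smul_apply, Matrix.of_apply,
    smul_eq_mul]
  rw [fderiv_add_const, fderiv_fun_sub (hF i j) ((hG i j).const_mul c),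
    fderiv_const_mul (hG i j)]
  simp

end PartialDerivatives

section Action

variable {N m : ℕ} {M : ℕ → ℕ → (Fin N → ℝ) → Matrix (Fin m) (Fin m) ℂ}
  {x : Fin N → ℝ} {l : ℕ}

/-- The action commutes with `∂_k`, except that its constant term disappears. -/
lemma pderM_lowAct (s : Matrix (Fin m) (Fin m) ℂ) (k : Fin N)
    (hM : ∀ a b i j, DifferentiableAt ℝ (fun y => M a b y i j) x) (a b : ℕ) :
    pderM k (lowAct s l M a b) x
      = (if l ≤ a then s * pderM k (M (a - l) b) x else 0)
        - (-1 : ℂ) ^ l • (if l ≤ b then pderM k (M a (b - l)) x * s else 0) := by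
  have hL : ∀ a b i j, DifferentiableAt ℝ (fun y => (s * M a b y) i j) x := fun a b i j => by
    simp only [Matrix.mul_apply]
    exact DifferentiableAt.fun_sum fun p _ => (hM a b p j).const_mul _
  have hR : ∀ a b i j, DifferentiableAt ℝ (fun y => (M a b y * s) i j) x := fun a b i j => by
    simp only [Matrix.mul_apply]
    exact DifferentiableAt.fun_sum fun p _ => (hM a b i p).mul_const _
  unfold lowAct
  rw [pderM_sub_smul_add_const]
  · congr 2
    · split_ifs
      · exact pderM_const_mul s (hM _ _)
      · exact pderM_const k x 0
    · split_ifs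
      · exact pderM_mul_const s (hM _ _)
      · exact pderM_const k x 0
  · intro i j
    split_ifs
    · exact hL _ _ i j
    · exact differentiableAt_const _
  · intro i j
    split_ifs
    · exact hR _ _ i j
    · exact differentiableAt_const _

lemma lowAct_right_zero (s : Matrix (Fin m) (Fin m) ℂ) (hl : 1 ≤ l) (a : ℕ) :
    lowAct s l M a 0 x
      = (if l ≤ a then s * M (a - l) 0 x else 0) + (if a + 1 = l then s else 0) := by
  simp [lowAct, show l ≠ 0 by omega]

/-- The constant term carries the sign `-(-1)^l`, which equals `(-1)^b` when `b + 1 = l`. -/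
lemma lowAct_left_zero (s : Matrix (Fin m) (Fin m) ℂ) (hl : 1 ≤ l) (b : ℕ) :
    lowAct s l M 0 b x
      = -((-1 : ℂ) ^ l • ((if l ≤ b then M 0 (b - l) x * s else 0)
          + (if b + 1 = l then s else 0))) := by
  by_cases h : b + 1 = l
  · subst h
    simp [lowAct, pow_succ]
  · simp [lowAct, h, show l ≠ 0 by omega]

end Action

/-- The infinitesimal lower-triangular action preserves the master equations:
the linearized master equations hold for `M' := (s z^{−l}.M)`. -/
theorem lower_triangular_action_preserves_master_equations
    {m N : ℕ} (hm : 1 ≤ m) (hN : 1 ≤ N)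
    (U : Set (Fin N → ℝ)) (hU : IsOpen U)
    (M : ℕ → ℕ → (Fin N → ℝ) → Matrix (Fin m) (Fin m) ℂ)
    (hsmooth : ∀ a b : ℕ, ∀ i j : Fin m, ContDiffOn ℝ 1 (fun x => M a b x i j) U)
    (hME1 : ∀ a b : ℕ, ∀ k : Fin N, ∀ x ∈ U,
      pderM k (M (a + 1) b) x = M a 0 x * pderM k (M 0 b) x)
    (hME2 : ∀ a b : ℕ, ∀ k : Fin N, ∀ x ∈ U,
      pderM k (M a (b + 1)) x = pderM k (M a 0) x * M 0 b x)
    (hME3 : ∀ a b : ℕ, ∀ x ∈ U,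
      M (a + 1) b x + M a (b + 1) x = M a 0 x * M 0 b x)
    (s : Matrix (Fin m) (Fin m) ℂ) (l : ℕ) (hl : 1 ≤ l)
    (M' : ℕ → ℕ → (Fin N → ℝ) → Matrix (Fin m) (Fin m) ℂ)
    (hM' : ∀ a b x, M' a b x = lowAct s l M a b x) :
    (∀ a b : ℕ, ∀ k : Fin N, ∀ x ∈ U,
      pderM k (M' (a + 1) b) x
        = M' a 0 x * pderM k (M 0 b) x + M a 0 x * pderM k (M' 0 b) x) ∧
    (∀ a b : ℕ, ∀ k : Fin N, ∀ x ∈ U,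
      pderM k (M' a (b + 1)) x
        = pderM k (M' a 0) x * M 0 b x + pderM k (M a 0) x * M' 0 b x) ∧
    (∀ a b : ℕ, ∀ x ∈ U,
      M' (a + 1) b x + M' a (b + 1) x
        = M' a 0 x * M 0 b x + M a 0 x * M' 0 b x) := by
  obtain rfl : M' = lowAct s l M := by
    funext a b x
    exact hM' a b x
  have hd : ∀ x ∈ U, ∀ a b i j, DifferentiableAt ℝ (fun y => M a b y i j) x :=
    fun x hx a b i j => ((hsmooth a b i j).differentiableOn one_ne_zero).differentiableAt
      (hU.mem_nhds hx)
  have hl0 : ¬ l ≤ 0 := by omega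
  refine ⟨fun a b k x hx => ?_, fun a b k x hx => ?_, fun a b x hx => ?_⟩
  · rw [pderM_lowAct s k (hd x hx), pderM_lowAct s k (hd x hx), lowAct_right_zero s hl]
    have hA : (if l ≤ a + 1 then s * pderM k (M (a + 1 - l) b) x else 0)
        = ((if l ≤ a then s * M (a - l) 0 x else 0) + (if a + 1 = l then s else 0))
          * pderM k (M 0 b) x := by
      rcases lt_trichotomy (a + 1) l with h | h | h
      · simp [show ¬ l ≤ a + 1 by omega, show ¬ l ≤ a by omega, h.ne]
      · subst h
        simp
      · simp [show l ≤ a + 1 by omega, show l ≤ a by omega, h.ne',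
          show a + 1 - l = a - l + 1 by omega, hME1 _ _ k x hx, mul_assoc]
    have hB : (if l ≤ b then pderM k (M (a + 1) (b - l)) x * s else 0)
        = M a 0 x * (if l ≤ b then pderM k (M 0 (b - l)) x * s else 0) := by
      split_ifs
      · rw [hME1 _ _ k x hx, mul_assoc]
      · simp
    rw [hA, hB, if_neg hl0, zero_sub, mul_neg, mul_smul_comm, sub_eq_add_neg]
  · rw [pderM_lowAct s k (hd x hx), pderM_lowAct s k (hd x hx), lowAct_left_zero s hl]
    have hA : (if l ≤ a then s * pderM k (M (a - l) (b + 1)) x else 0)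
        = (if l ≤ a then s * pderM k (M (a - l) 0) x else 0) * M 0 b x := by
      split_ifs
      · rw [hME2 _ _ k x hx, mul_assoc]
      · simp
    have hB : (if l ≤ b + 1 then pderM k (M a (b + 1 - l)) x * s else 0)
        = pderM k (M a 0) x
          * ((if l ≤ b then M 0 (b - l) x * s else 0) + (if b + 1 = l then s else 0)) := by
      rcases lt_trichotomy (b + 1) l with h | h | h
      · simp [show ¬ l ≤ b + 1 by omega, show ¬ l ≤ b by omega, h.ne]
      · subst h
        simp
      · simp [show l ≤ b + 1 by omega, show l ≤ b by omega, h.ne',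
          show b + 1 - l = b - l + 1 by omega, hME2 _ _ k x hx, mul_assoc]
    rw [hA, hB, if_neg hl0, smul_zero, sub_zero, mul_neg, mul_smul_comm, sub_eq_add_neg]
  · rw [lowAct_right_zero s hl, lowAct_left_zero s hl]
    have hA : (if l ≤ a + 1 then s * M (a + 1 - l) b x else 0)
          + (if l ≤ a then s * M (a - l) (b + 1) x else 0)
        = ((if l ≤ a then s * M (a - l) 0 x else 0) + (if a + 1 = l then s else 0))
          * M 0 b x := by
      rcases lt_trichotomy (a + 1) l with h | h | h
      · simp [show ¬ l ≤ a + 1 by omega, show ¬ l ≤ a by omega, h.ne]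
      · subst h
        simp
      · simp [show l ≤ a + 1 by omega, show l ≤ a by omega, h.ne',
          show a + 1 - l = a - l + 1 by omega, mul_assoc, ← hME3 _ _ x hx, mul_add]
    have hB : (if l ≤ b then M (a + 1) (b - l) x * s else 0)
          + (if l ≤ b + 1 then M a (b + 1 - l) x * s else 0)
        = M a 0 x
          * ((if l ≤ b then M 0 (b - l) x * s else 0) + (if b + 1 = l then s else 0)) := by
      rcases lt_trichotomy (b + 1) l with h | h | h
      · simp [show ¬ l ≤ b + 1 by omega, show ¬ l ≤ b by omega, h.ne]
      · subst h
        simp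
      · simp [show l ≤ b + 1 by omega, show l ≤ b by omega, h.ne',
          show b + 1 - l = b - l + 1 by omega, ← mul_assoc, ← hME3 _ _ x hx, add_mul]
    rw [← hA, mul_neg, mul_smul_comm, ← hB]
    simp only [lowAct, show a + (b + 1) + 1 = a + 1 + b + 1 by omega, pow_succ, smul_add]
    -- The constant terms of `(a + 1, b)` and `(a, b + 1)` carry opposite signs and cancel.
    rw [mul_neg_one, neg_smul]
    abel
end

section
/- Let K be a field of characteristic zero, let λ ∈ K[t_1,…,t_N] be a nonzero homogeneous polynomial of degree 1, and let P ∈ K[t_1,…,t_N] be homogeneous of degree d ≥ 0 such that (∂_i λ)·(∂_j P) = (∂_j λ)·(∂_i P) for all i, j ∈ {1,…,N} (i.e. dλ ∧ dP = 0). Then there exists a constant c ∈ K with P = c·λ^d. -/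
/-!
Write `∂ᵢλ = aᵢ ∈ K`. Euler's identity for `λ` gives some `aₖ ≠ 0`. Combining Euler's identity for
`P`, homogeneous of degree `d + 1`, with the wedge condition gives
`aₖ (d + 1) P = ∑ⱼ tⱼ aₖ ∂ⱼP = ∑ⱼ tⱼ aⱼ ∂ₖP = λ ∂ₖP`.
Since the `aᵢ` are constants and partial derivatives commute, `∂ₖP` satisfies the wedge condition
again, so the result follows by induction on `d`; characteristic zero allows division by `d + 1`.
-/

open MvPolynomial in
/-- Partial derivatives commute: the commutator is a derivation vanishing on the variables. -/
lemma pderiv_pderiv_swap {σ K : Type*} [CommRing K] (i j : σ) (P : MvPolynomial σ K) :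
    pderiv i (pderiv j P) = pderiv j (pderiv i P) := by
  classical
  have h : ⁅pderiv (R := K) i, pderiv (R := K) j⁆ = 0 := by
    apply MvPolynomial.derivation_ext
    intro k
    simp [Derivation.commutator_apply, pderiv_X, Pi.single_apply, apply_ite]
  have h' := congrArg (fun D => D P) h
  simpa [Derivation.commutator_apply, sub_eq_zero] using h'

open MvPolynomial in
/-- The inductive form of the statement, with the gradient of `lam` given as a constant vector `a`
having a nonzero entry `a k`. -/
lemma eq_C_mul_pow_of_wedge {K : Type*} [Field K] [CharZero K] {N : ℕ}
    {lam : MvPolynomial (Fin N) K} (a : Fin N → K) (hlam : ∑ i, X i * C (a i) = lam)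
    (k : Fin N) (hk : a k ≠ 0) (d : ℕ) :
    ∀ P : MvPolynomial (Fin N) K, P.IsHomogeneous d →
      (∀ i j, C (a i) * pderiv j P = C (a j) * pderiv i P) →
      ∃ c : K, P = C c * lam ^ d := by
  induction d with
  | zero =>
    intro P hP _
    rw [← totalDegree_zero_iff_isHomogeneous, totalDegree_eq_zero_iff_eq_C] at hP
    exact ⟨_, by simpa using hP⟩
  | succ d ih =>
    intro P hP hw
    obtain ⟨c, hc⟩ := ih (pderiv k P) (by simpa using hP.pderiv (i := k)) (by
      intro i j
      have h := congrArg (pderiv k) (hw i j)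
      rw [pderiv_C_mul, pderiv_C_mul] at h
      rwa [pderiv_pderiv_swap k j, pderiv_pderiv_swap k i] at h)
    have hne : a k * ((d : K) + 1) ≠ 0 := mul_ne_zero hk (by exact_mod_cast d.succ_ne_zero)
    have key : C (a k * ((d : K) + 1)) * P = lam * pderiv k P := by
      have he := hP.sum_X_mul_pderiv
      calc C (a k * ((d : K) + 1)) * P = C (a k) * ((d + 1) • P) := by
            simp [nsmul_eq_mul, mul_assoc]
        _ = ∑ j, X j * (C (a k) * pderiv j P) := by
            rw [← he, Finset.mul_sum]
            exact Finset.sum_congr rfl fun j _ => by ring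
        _ = lam * pderiv k P := by
            rw [← hlam, Finset.sum_mul]
            exact Finset.sum_congr rfl fun j _ => by rw [hw k j]; ring
    refine ⟨(a k * ((d : K) + 1))⁻¹ * c, ?_⟩
    calc P = C ((a k * ((d : K) + 1))⁻¹) * (C (a k * ((d : K) + 1)) * P) := by
          rw [← mul_assoc, ← C_mul, inv_mul_cancel₀ hne, C_1, one_mul]
      _ = _ := by rw [key, hc, C_mul]; ring


/-- If `λ` is a nonzero homogeneous degree-1 polynomial and `P` is homogeneous of
degree `d` over a field of characteristic zero, and `dλ ∧ dP = 0`
(`(∂ᵢλ)(∂ⱼP) = (∂ⱼλ)(∂ᵢP)` for all `i, j`), then `P = c·λ^d` for some constant `c`. -/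
theorem homogeneous_wedge_zero_is_power_of_linear_form
    (K : Type*) [Field K] [CharZero K] (N : ℕ)
    (lam P : MvPolynomial (Fin N) K)
    (hlam_ne : lam ≠ 0) (hlam : lam.IsHomogeneous 1)
    (d : ℕ) (hP : P.IsHomogeneous d)
    (hwedge : ∀ i j : Fin N,
      MvPolynomial.pderiv i lam * MvPolynomial.pderiv j P
        = MvPolynomial.pderiv j lam * MvPolynomial.pderiv i P) :
    ∃ c : K, P = MvPolynomial.C c * lam ^ d := by
  have ha : ∀ i, ∃ a : K, MvPolynomial.pderiv i lam = MvPolynomial.C a := by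
    intro i
    have h := hlam.pderiv (i := i)
    rw [Nat.sub_self, ← MvPolynomial.totalDegree_zero_iff_isHomogeneous,
      MvPolynomial.totalDegree_eq_zero_iff_eq_C] at h
    exact ⟨_, h⟩
  choose a ha using ha
  have hE : ∑ i, MvPolynomial.X i * MvPolynomial.C (a i) = lam := by
    simpa [ha] using hlam.sum_X_mul_pderiv
  obtain ⟨k, hk⟩ : ∃ k, a k ≠ 0 := by
    by_contra! h
    exact hlam_ne (by rw [← hE]; simp [h])
  exact eq_C_mul_pow_of_wedge a hE k hk d P hP (by simpa only [ha] using hwedge)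
end

section
/- Let A = ℂ[p_{a,μ}, q_b^ν : a, b ∈ ℕ, μ, ν ∈ {1,…,m}] be the polynomial ring in the displayed countable family of variables. For s ∈ Mat_{m×m}(ℂ) and an integer l ≥ 1, let ŝ(s,l) : A → A be the ℂ-linear operator D_{s,l} + (multiplication by P_{s,l}), where D_{s,l} is the unique ℂ-derivation of A with D_{s,l}(p_{a,μ}) = Σ_ν s_{νμ}·p_{a+l,ν} and D_{s,l}(q_b^μ) = −(−1)^l·Σ_ν s_{μν}·q_{b+l}^ν, and P_{s,l} := Σ_{i+j=l−1, i,j≥0} (−1)^j Σ_{μ,ν} s_{μν}·p_{i,μ}·q_j^ν ∈ A. Then for all s, s' ∈ Mat_{m×m}(ℂ) and all integers l, l' ≥ 1: ŝ(s,l) ∘ ŝ(s',l') − ŝ(s',l') ∘ ŝ(s,l) = ŝ(s·s' − s'·s, l + l'). -/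
/-!
Write `B s i j = Σ_{μ,ν} s_{μν} p_{i,μ} q_j^ν`, so that `P_{s,l} = Σ_{i+j=l-1} (-1)^j B s i j`.
Since the `D`'s are derivations, the commutator of the operators `D + P` is
`[D, D'] + (D P' - D' P)`. Both parts are matched separately:

* `[D_{s,l}, D_{s',l'}] = D_{[s,s'],l+l'}` holds on the generators (`Dsl_bracket`);
* `D_{s,l} (B s' i j) = B (s s') (i+l) j - (-1)^l B (s' s) i (j+l)` (`Dsl_pqForm`), so in
  `D P' - D' P` the terms with `s s'` are those of `P_{s s',l+l'}`, split according to whether the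
  index of `p` is at least `l` (from `D P'`) or below `l` (from `D' P`), and the terms with `s' s`
  are likewise those of `-P_{s' s,l+l'}`, split at `l'` (`Psl_split`).
-/

/-- Variables of the polynomial ring `ℂ[p_{a,μ}, q_b^ν]`: `inl (a, μ)` is `p_{a,μ}`,
`inr (b, ν)` is `q_b^ν`. -/
abbrev PQVar (m : ℕ) := (ℕ × Fin m) ⊕ (ℕ × Fin m)

/-- The polynomial ring `A = ℂ[p_{a,μ}, q_b^ν : a, b ∈ ℕ, μ, ν ∈ {1,…,m}]`. -/
abbrev PolyA (m : ℕ) := MvPolynomial (PQVar m) ℂ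

/-- The derivation `D_{s,l}` with `D(p_{a,μ}) = Σ_ν s_{νμ}·p_{a+l,ν}` and
`D(q_b^μ) = −(−1)^l·Σ_ν s_{μν}·q_{b+l}^ν`. -/
noncomputable def Dsl {m : ℕ} (s : Matrix (Fin m) (Fin m) ℂ) (l : ℕ) :
    Derivation ℂ (PolyA m) (PolyA m) :=
  MvPolynomial.mkDerivation ℂ fun v =>
    match v with
    | .inl (a, μ) => ∑ ν : Fin m, s ν μ • MvPolynomial.X (.inl (a + l, ν))
    | .inr (b, μ) => -(-1 : ℂ) ^ l • ∑ ν : Fin m, s μ ν • MvPolynomial.X (.inr (b + l, ν))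

/-- The polynomial `P_{s,l} = Σ_{i+j=l−1} (−1)^j Σ_{μ,ν} s_{μν}·p_{i,μ}·q_j^ν`. -/
noncomputable def Psl {m : ℕ} (s : Matrix (Fin m) (Fin m) ℂ) (l : ℕ) : PolyA m :=
  ∑ i ∈ Finset.range l, (-1 : ℂ) ^ (l - 1 - i) •
    ∑ μ : Fin m, ∑ ν : Fin m,
      s μ ν • (MvPolynomial.X (.inl (i, μ)) * MvPolynomial.X (.inr (l - 1 - i, ν)))

/-- The quantization `ŝ(s,l) = D_{s,l} + (multiplication by P_{s,l})` of the
lower-triangular element `s·z^{−l}`. -/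
noncomputable def shat {m : ℕ} (s : Matrix (Fin m) (Fin m) ℂ) (l : ℕ) :
    PolyA m → PolyA m :=
  fun f => Dsl s l f + Psl s l * f

open MvPolynomial

/-- The bilinear expression `Σ_{μ,ν} s_{μν} p_{i,μ} q_j^ν`. -/
noncomputable def pqForm {m : ℕ} (s : Matrix (Fin m) (Fin m) ℂ) (i j : ℕ) : PolyA m :=
  ∑ μ : Fin m, ∑ ν : Fin m, s μ ν • (X (.inl (i, μ)) * X (.inr (j, ν)))

lemma pqForm_sub {m : ℕ} (s t : Matrix (Fin m) (Fin m) ℂ) (i j : ℕ) :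
    pqForm (s - t) i j = pqForm s i j - pqForm t i j := by
  simp only [pqForm, Matrix.sub_apply, sub_smul, Finset.sum_sub_distrib]

lemma Psl_eq {m : ℕ} (s : Matrix (Fin m) (Fin m) ℂ) (l : ℕ) :
    Psl s l = ∑ i ∈ Finset.range l, (-1 : ℂ) ^ (l - 1 - i) • pqForm s i (l - 1 - i) := rfl

lemma Psl_sub {m : ℕ} (s t : Matrix (Fin m) (Fin m) ℂ) (l : ℕ) :
    Psl (s - t) l = Psl s l - Psl t l := by
  simp only [Psl_eq, pqForm_sub, smul_sub, Finset.sum_sub_distrib]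

lemma Dsl_p {m : ℕ} (s : Matrix (Fin m) (Fin m) ℂ) (l a : ℕ) (μ : Fin m) :
    Dsl s l (X (.inl (a, μ))) = ∑ ν : Fin m, s ν μ • X (.inl (a + l, ν)) := by
  simp [Dsl, mkDerivation_X]

lemma Dsl_q {m : ℕ} (s : Matrix (Fin m) (Fin m) ℂ) (l b : ℕ) (μ : Fin m) :
    Dsl s l (X (.inr (b, μ))) =
      (-(-1 : ℂ) ^ l) • ∑ ν : Fin m, s μ ν • X (.inr (b + l, ν)) := by
  simp [Dsl, mkDerivation_X]

lemma Dsl_Dsl_p {m : ℕ} (s s' : Matrix (Fin m) (Fin m) ℂ) (l l' a : ℕ) (μ : Fin m) :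
    Dsl s l (Dsl s' l' (X (.inl (a, μ)))) =
      ∑ ν : Fin m, (s * s') ν μ • X (.inl (a + (l + l'), ν)) := by
  simp only [Dsl_p, map_sum, Derivation.map_smul, Matrix.mul_apply, Finset.sum_smul,
    Finset.smul_sum, smul_smul]
  rw [Finset.sum_comm]
  refine Finset.sum_congr rfl fun ν _ => Finset.sum_congr rfl fun κ _ => ?_
  rw [mul_comm, show a + l' + l = a + (l + l') by omega]

lemma Dsl_Dsl_q {m : ℕ} (s s' : Matrix (Fin m) (Fin m) ℂ) (l l' b : ℕ) (μ : Fin m) :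
    Dsl s l (Dsl s' l' (X (.inr (b, μ)))) =
      (-1 : ℂ) ^ (l + l') • ∑ ν : Fin m, (s' * s) μ ν • X (.inr (b + (l + l'), ν)) := by
  simp only [Dsl_q, map_sum, Derivation.map_smul, Matrix.mul_apply, Finset.sum_smul,
    Finset.smul_sum, smul_smul]
  rw [Finset.sum_comm]
  refine Finset.sum_congr rfl fun ν _ => Finset.sum_congr rfl fun κ _ => ?_
  rw [show b + l' + l = b + (l + l') by omega]
  congr 1
  ring

lemma Dsl_bracket {m : ℕ} (s s' : Matrix (Fin m) (Fin m) ℂ) (l l' : ℕ) :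
    ⁅Dsl s l, Dsl s' l'⁆ = Dsl (s * s' - s' * s) (l + l') := by
  refine MvPolynomial.derivation_ext fun v => ?_
  rw [Derivation.commutator_apply]
  rcases v with ⟨a, μ⟩ | ⟨b, μ⟩
  · rw [Dsl_Dsl_p, Dsl_Dsl_p, Dsl_p, add_comm l' l]
    simp only [Matrix.sub_apply, sub_smul, Finset.sum_sub_distrib]
  · rw [Dsl_Dsl_q, Dsl_Dsl_q, Dsl_q, add_comm l' l]
    simp only [Matrix.sub_apply, sub_smul, Finset.sum_sub_distrib, smul_sub, neg_smul]
    abel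

lemma Dsl_pqForm {m : ℕ} (s s' : Matrix (Fin m) (Fin m) ℂ) (l i j : ℕ) :
    Dsl s l (pqForm s' i j) =
      pqForm (s * s') (i + l) j - (-1 : ℂ) ^ l • pqForm (s' * s) i (j + l) := by
  have h1 : pqForm (s * s') (i + l) j =
      ∑ μ : Fin m, ∑ ν : Fin m, s' μ ν • (X (.inr (j, ν)) * Dsl s l (X (.inl (i, μ)))) := by
    simp only [pqForm, Dsl_p, Matrix.mul_apply, Finset.sum_smul, Finset.smul_sum,
      Finset.mul_sum, mul_smul_comm, smul_smul]
    rw [Finset.sum_comm]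
    conv_rhs => rw [Finset.sum_comm]
    refine Finset.sum_congr rfl fun ν _ => ?_
    rw [Finset.sum_comm]
    refine Finset.sum_congr rfl fun κ _ => Finset.sum_congr rfl fun μ _ => ?_
    rw [mul_comm (s _ _), mul_comm (X _)]
  have h2 : -((-1 : ℂ) ^ l • pqForm (s' * s) i (j + l)) =
      ∑ μ : Fin m, ∑ ν : Fin m, s' μ ν • (X (.inl (i, μ)) * Dsl s l (X (.inr (j, ν)))) := by
    rw [← neg_smul]
    simp only [pqForm, Dsl_q, Matrix.mul_apply, Finset.sum_smul, Finset.smul_sum,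
      Finset.mul_sum, mul_smul_comm, smul_smul]
    refine Finset.sum_congr rfl fun μ _ => ?_
    rw [Finset.sum_comm]
    refine Finset.sum_congr rfl fun κ _ => Finset.sum_congr rfl fun ν _ => ?_
    congr 1
    ring
  rw [sub_eq_add_neg, h1, h2]
  simp only [pqForm, map_sum, Derivation.map_smul, Derivation.leibniz, smul_eq_mul, smul_add,
    Finset.sum_add_distrib]
  rw [add_comm]

/-- The terms of `P_{t,l+l'}`, split at the index `l` of the variable `p`. -/
lemma Psl_split {m : ℕ} (t : Matrix (Fin m) (Fin m) ℂ) (l l' : ℕ) :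
    Psl t (l + l') =
      ∑ i ∈ Finset.range l, (-1 : ℂ) ^ (l - 1 - i) •
          ((-1 : ℂ) ^ l' • pqForm t i (l - 1 - i + l')) +
        ∑ i ∈ Finset.range l', (-1 : ℂ) ^ (l' - 1 - i) • pqForm t (i + l) (l' - 1 - i) := by
  rw [Psl_eq, Finset.sum_range_add]
  refine congrArg₂ (· + ·) ?_ ?_
  · refine Finset.sum_congr rfl fun i hi => ?_
    have := Finset.mem_range.mp hi
    rw [smul_smul, ← pow_add, show l + l' - 1 - i = l - 1 - i + l' by omega]
  · refine Finset.sum_congr rfl fun i hi => ?_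
    have := Finset.mem_range.mp hi
    rw [show l + l' - 1 - (l + i) = l' - 1 - i by omega, add_comm l i]

lemma Dsl_Psl_sub {m : ℕ} (s s' : Matrix (Fin m) (Fin m) ℂ) (l l' : ℕ) :
    Dsl s l (Psl s' l') - Dsl s' l' (Psl s l) = Psl (s * s' - s' * s) (l + l') := by
  rw [Psl_sub, Psl_split (s * s') l l', add_comm l l', Psl_split (s' * s) l' l]
  simp only [Psl_eq, map_sum, Derivation.map_smul, Dsl_pqForm, smul_sub, Finset.sum_sub_distrib]
  abel

/-- The assignment `s·z^{−l} ↦ ŝ(s,l)` is a Lie algebra homomorphism: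
`[ŝ(s,l), ŝ(s',l')] = ŝ(s·s' − s'·s, l+l')`. -/
theorem shat_commutator (m : ℕ) (s s' : Matrix (Fin m) (Fin m) ℂ)
    (l l' : ℕ) (hl : 1 ≤ l) (hl' : 1 ≤ l') :
    ∀ f : PolyA m,
      shat s l (shat s' l' f) - shat s' l' (shat s l f)
        = shat (s * s' - s' * s) (l + l') f := by
  intro f
  simp only [shat]
  rw [← Dsl_bracket, ← Dsl_Psl_sub, Derivation.commutator_apply]
  simp only [map_add, Derivation.leibniz, smul_eq_mul]
  ring
end

section
/- Let A = ℂ[p_{a,μ}, q_b^ν : a, b ∈ ℕ, μ, ν ∈ {1,…,m}] be the polynomial ring in the displayed countable family of variables. For r ∈ Mat_{m×m}(ℂ) and an integer l ≥ 1, let r̂(r,l) : A → A be the ℂ-linear operator E_{r,l} + S_{r,l}, where E_{r,l} is the unique ℂ-derivation of A with E_{r,l}(p_{a+l,κ}) = Σ_μ r_{μκ}·p_{a,μ} for a ≥ 0, E_{r,l}(p_{c,κ}) = 0 for c < l, E_{r,l}(q_{b+l}^κ) = −(−1)^l·Σ_ν r_{κν}·q_b^ν for b ≥ 0, E_{r,l}(q_c^κ)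 = 0 for c < l; and S_{r,l} := Σ_{i+j=l−1, i,j≥0} (−1)^{i+1} Σ_{κ,λ} r_{κλ}·(∂/∂q_i^κ) ∘ (∂/∂p_{j,λ}) is a second-order differential operator. Then for all r, r' ∈ Mat_{m×m}(ℂ) and all integers l, l' ≥ 1: r̂(r,l) ∘ r̂(r',l') − r̂(r',l') ∘ r̂(r,l) = r̂(r·r' − r'·r, l + l'). -/
/-- The derivation `E_{r,l}` with `E(p_{a+l,κ}) = Σ_μ r_{μκ}·p_{a,μ}`,
`E(p_c) = 0` for `c < l`, `E(q_{b+l}^κ) = −(−1)^l·Σ_ν r_{κν}·q_b^ν`, and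
`E(q_c^κ) = 0` for `c < l`. -/
noncomputable def Erl {m : ℕ} (r : Matrix (Fin m) (Fin m) ℂ) (l : ℕ) :
    Derivation ℂ (PolyA m) (PolyA m) :=
  MvPolynomial.mkDerivation ℂ fun v =>
    match v with
    | .inl (c, κ) =>
        if l ≤ c then ∑ μ : Fin m, r μ κ • MvPolynomial.X (.inl (c - l, μ)) else 0
    | .inr (c, κ) =>
        if l ≤ c then -(-1 : ℂ) ^ l • ∑ ν : Fin m, r κ ν • MvPolynomial.X (.inr (c - l, ν))
        else 0

/-- The second-order operator
`S_{r,l} = Σ_{i+j=l−1} (−1)^{i+1} Σ_{κ,λ} r_{κλ}·(∂/∂q_i^κ)∘(∂/∂p_{j,λ})`. -/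
noncomputable def Srl {m : ℕ} (r : Matrix (Fin m) (Fin m) ℂ) (l : ℕ) :
    PolyA m → PolyA m :=
  fun f => ∑ i ∈ Finset.range l, (-1 : ℂ) ^ (i + 1) •
    ∑ κ : Fin m, ∑ lam : Fin m,
      r κ lam • MvPolynomial.pderiv (.inr (i, κ))
        (MvPolynomial.pderiv (.inl (l - 1 - i, lam)) f)

/-- The quantization `r̂(r,l) = E_{r,l} + S_{r,l}` of the upper-triangular element
`r·z^l`. -/
noncomputable def rhat {m : ℕ} (r : Matrix (Fin m) (Fin m) ℂ) (l : ℕ) :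
    PolyA m → PolyA m :=
  fun f => Erl r l f + Srl r l f

open MvPolynomial

theorem derivation_sum_apply {m : ℕ} {ι : Type*} (s : Finset ι)
    (D : ι → Derivation ℂ (PolyA m) (PolyA m)) (f : PolyA m) :
    (∑ i ∈ s, D i) f = ∑ i ∈ s, D i f := by
  have h := congrFun (map_sum
    (Derivation.coeFnAddMonoidHom : Derivation ℂ (PolyA m) (PolyA m) →+ _) D s) f
  rw [Finset.sum_apply] at h
  exact h

theorem Erl_X_inl {m : ℕ} (r : Matrix (Fin m) (Fin m) ℂ) (l c : ℕ) (κ : Fin m) :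
    Erl r l (X (.inl (c, κ))) =
      if l ≤ c then ∑ μ : Fin m, r μ κ • X (.inl (c - l, μ)) else 0 := by
  simp [Erl, mkDerivation_X]

theorem Erl_X_inr {m : ℕ} (r : Matrix (Fin m) (Fin m) ℂ) (l c : ℕ) (κ : Fin m) :
    Erl r l (X (.inr (c, κ))) =
      if l ≤ c then -(-1 : ℂ) ^ l • ∑ ν : Fin m, r κ ν • X (.inr (c - l, ν)) else 0 := by
  simp [Erl, mkDerivation_X]

/-- On the `p`-variables composition multiplies the matrices in order, on the `q`-variables in the
opposite order; the sign in the definition of `E` on the `q`-variables compensates for this. -/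
theorem Erl_lie {m : ℕ} (r r' : Matrix (Fin m) (Fin m) ℂ) (l l' : ℕ) :
    ⁅Erl r l, Erl r' l'⁆ = Erl (r * r' - r' * r) (l + l') := by
  have hp : ∀ (s s' : Matrix (Fin m) (Fin m) ℂ) (k k' c : ℕ) (κ : Fin m),
      Erl s k (Erl s' k' (X (.inl (c, κ)))) =
        if k + k' ≤ c then ∑ μ : Fin m, (s * s') μ κ • X (.inl (c - (k + k'), μ)) else 0 := by
    intro s s' k k' c κ
    rw [Erl_X_inl]
    by_cases h' : k' ≤ c
    · simp only [if_pos h', map_sum, Derivation.map_smul, Erl_X_inl]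
      by_cases h : k + k' ≤ c
      · have h1 : k ≤ c - k' := by omega
        have h2 : c - k' - k = c - (k + k') := by omega
        simp only [if_pos h, if_pos h1, h2, Finset.smul_sum, Matrix.mul_apply, Finset.sum_smul,
          smul_smul]
        rw [Finset.sum_comm]
        simp only [mul_comm]
      · have h1 : ¬ k ≤ c - k' := by omega
        simp [h, h1]
    · have h : ¬ k + k' ≤ c := by omega
      simp [h, h']
  have hq : ∀ (s s' : Matrix (Fin m) (Fin m) ℂ) (k k' c : ℕ) (κ : Fin m),
      Erl s k (Erl s' k' (X (.inr (c, κ)))) =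
        if k + k' ≤ c then (-1 : ℂ) ^ (k + k') •
          ∑ μ : Fin m, (s' * s) κ μ • X (.inr (c - (k + k'), μ)) else 0 := by
    intro s s' k k' c κ
    rw [Erl_X_inr]
    by_cases h' : k' ≤ c
    · simp only [if_pos h', map_sum, Derivation.map_smul, Erl_X_inr]
      by_cases h : k + k' ≤ c
      · have h1 : k ≤ c - k' := by omega
        have h2 : c - k' - k = c - (k + k') := by omega
        simp only [if_pos h, if_pos h1, h2, Finset.smul_sum, Matrix.mul_apply, Finset.sum_smul,
          smul_smul]
        rw [Finset.sum_comm]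
        refine Finset.sum_congr rfl fun _ _ => Finset.sum_congr rfl fun _ _ => ?_
        congr 1
        ring
      · have h1 : ¬ k ≤ c - k' := by omega
        simp [h, h1]
    · have h : ¬ k + k' ≤ c := by omega
      simp [h, h']
  apply MvPolynomial.derivation_ext
  rintro (⟨c, κ⟩ | ⟨c, κ⟩)
  · rw [Derivation.commutator_apply, hp, hp, Erl_X_inl, add_comm l' l]
    split_ifs
    · simp only [Matrix.sub_apply, sub_smul, Finset.sum_sub_distrib]
    · simp
  · rw [Derivation.commutator_apply, hq, hq, Erl_X_inr, add_comm l' l]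
    split_ifs
    · simp only [Matrix.sub_apply, sub_smul, Finset.sum_sub_distrib, neg_smul, smul_sub]
      abel
    · simp

/-- `[E_{r,l}, ∂/∂p_{j,λ}] = -Σ_κ r_{λκ} ∂/∂p_{j+l,κ}`. -/
theorem Erl_pderiv_inl {m : ℕ} (r : Matrix (Fin m) (Fin m) ℂ) (l j : ℕ) (lam : Fin m)
    (f : PolyA m) :
    Erl r l (pderiv (.inl (j, lam)) f) =
      pderiv (.inl (j, lam)) (Erl r l f) - ∑ κ : Fin m, r lam κ • pderiv (.inl (j + l, κ)) f := by
  have h : ⁅Erl r l, pderiv (R := ℂ) (.inl (j, lam))⁆ =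
      -∑ κ : Fin m, r lam κ • pderiv (R := ℂ) (Sum.inl (j + l, κ) : PQVar m) := by
    apply MvPolynomial.derivation_ext
    rintro (⟨c, κ⟩ | ⟨c, κ⟩)
    · rw [Derivation.commutator_apply, Erl_X_inl]
      by_cases hc : l ≤ c
      · have h1 : ∀ x, (c - l = j ∧ x = lam) ↔ (c = j + l ∧ x = lam) := by
          intro x; constructor <;> rintro ⟨a, b⟩ <;> exact ⟨by omega, b⟩
        by_cases h2 : c = j + l <;>
          simp [hc, pderiv_X, Pi.single_apply, apply_ite, derivation_sum_apply, h2, h1]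
      · have h1 : c ≠ j + l := by omega
        simp [hc, h1, pderiv_X, Pi.single_apply, apply_ite, derivation_sum_apply]
    · rw [Derivation.commutator_apply, Erl_X_inr]
      split_ifs <;> simp [pderiv_X, derivation_sum_apply]
  have h2 := congrArg (fun D : Derivation ℂ (PolyA m) (PolyA m) => D f) h
  simp only [Derivation.commutator_apply, Derivation.coe_neg, Pi.neg_apply, derivation_sum_apply,
    Derivation.coe_smul, Pi.smul_apply] at h2
  rw [sub_eq_iff_eq_add] at h2
  rw [h2]; abel

/-- `[E_{r,l}, ∂/∂q_i^κ] = (-1)^l Σ_ν r_{νκ} ∂/∂q_{i+l}^ν`. -/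
theorem Erl_pderiv_inr {m : ℕ} (r : Matrix (Fin m) (Fin m) ℂ) (l i : ℕ) (κ : Fin m)
    (f : PolyA m) :
    Erl r l (pderiv (.inr (i, κ)) f) =
      pderiv (.inr (i, κ)) (Erl r l f) +
        (-1 : ℂ) ^ l • ∑ ν : Fin m, r ν κ • pderiv (.inr (i + l, ν)) f := by
  have h : ⁅Erl r l, pderiv (R := ℂ) (.inr (i, κ))⁆ =
      (-1 : ℂ) ^ l • ∑ ν : Fin m, r ν κ • pderiv (R := ℂ) (Sum.inr (i + l, ν) : PQVar m) := by
    apply MvPolynomial.derivation_ext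
    rintro (⟨c, μ⟩ | ⟨c, μ⟩)
    · rw [Derivation.commutator_apply, Erl_X_inl]
      split_ifs <;> simp [pderiv_X, derivation_sum_apply]
    · rw [Derivation.commutator_apply, Erl_X_inr]
      by_cases hc : l ≤ c
      · have h1 : ∀ x, (c - l = i ∧ x = κ) ↔ (c = i + l ∧ x = κ) := by
          intro x; constructor <;> rintro ⟨a, b⟩ <;> exact ⟨by omega, b⟩
        by_cases h2 : c = i + l <;>
          simp [hc, pderiv_X, Pi.single_apply, apply_ite, derivation_sum_apply, h2, h1]
      · have h1 : c ≠ i + l := by omega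
        simp [hc, h1, pderiv_X, Pi.single_apply, apply_ite, derivation_sum_apply]
  have h2 := congrArg (fun D : Derivation ℂ (PolyA m) (PolyA m) => D f) h
  simp only [Derivation.commutator_apply, derivation_sum_apply,
    Derivation.coe_smul, Pi.smul_apply] at h2
  rw [sub_eq_iff_eq_add] at h2
  rw [h2]; abel

/-- The contracted second-order operator `Σ_{κ,λ} M_{κλ} (∂/∂q_i^κ) ∘ (∂/∂p_{j,λ})`; the operator
`S_{r,l}` is an alternating sum of these. -/
noncomputable def contr {m : ℕ} (M : Matrix (Fin m) (Fin m) ℂ) (i j : ℕ) :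
    PolyA m →ₗ[ℂ] PolyA m :=
  ∑ κ : Fin m, ∑ lam : Fin m, M κ lam •
    ((pderiv (.inr (i, κ))).toLinearMap ∘ₗ (pderiv (.inl (j, lam))).toLinearMap)

theorem contr_apply {m : ℕ} (M : Matrix (Fin m) (Fin m) ℂ) (i j : ℕ) (f : PolyA m) :
    contr M i j f = ∑ κ : Fin m, ∑ lam : Fin m,
      M κ lam • pderiv (.inr (i, κ)) (pderiv (.inl (j, lam)) f) := by
  simp [contr, LinearMap.sum_apply]

theorem contr_sub {m : ℕ} (M N : Matrix (Fin m) (Fin m) ℂ) (i j : ℕ) (f : PolyA m) :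
    contr (M - N) i j f = contr M i j f - contr N i j f := by
  simp [contr_apply, sub_smul, Finset.sum_sub_distrib]

theorem Srl_eq {m : ℕ} (r : Matrix (Fin m) (Fin m) ℂ) (l : ℕ) (f : PolyA m) :
    Srl r l f = ∑ i ∈ Finset.range l, (-1 : ℂ) ^ (i + 1) • contr r i (l - 1 - i) f := by
  simp only [Srl, contr_apply]

theorem Srl_add {m : ℕ} (r : Matrix (Fin m) (Fin m) ℂ) (l : ℕ) (f g : PolyA m) :
    Srl r l (f + g) = Srl r l f + Srl r l g := by
  simp only [Srl_eq, map_add, smul_add, Finset.sum_add_distrib]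

theorem pderiv_pderiv_comm {m : ℕ} (v w : PQVar m) (f : PolyA m) :
    pderiv v (pderiv w f) = pderiv w (pderiv v f) := by
  have h : ⁅pderiv (R := ℂ) v, pderiv (R := ℂ) w⁆ = 0 := by
    apply MvPolynomial.derivation_ext
    intro x
    simp only [Derivation.commutator_apply, pderiv_X, Pi.single_apply, apply_ite, map_zero]
    simp
  have h2 := congrArg (fun D : Derivation ℂ (PolyA m) (PolyA m) => D f) h
  simpa [Derivation.commutator_apply, sub_eq_zero] using h2

theorem pderiv_contr {m : ℕ} (M : Matrix (Fin m) (Fin m) ℂ) (i j : ℕ) (v : PQVar m)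
    (f : PolyA m) : pderiv v (contr M i j f) = contr M i j (pderiv v f) := by
  simp only [contr_apply, map_sum, Derivation.map_smul]
  refine Finset.sum_congr rfl fun κ _ => Finset.sum_congr rfl fun lam _ => ?_
  rw [pderiv_pderiv_comm v, pderiv_pderiv_comm v]

theorem contr_comm {m : ℕ} (M N : Matrix (Fin m) (Fin m) ℂ) (i j i' j' : ℕ) (f : PolyA m) :
    contr M i j (contr N i' j' f) = contr N i' j' (contr M i j f) := by
  rw [contr_apply M, contr_apply M]
  simp only [map_sum, map_smul, pderiv_contr]

/-- Both operators have constant coefficients. -/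
theorem Srl_comm {m : ℕ} (r r' : Matrix (Fin m) (Fin m) ℂ) (l l' : ℕ) (f : PolyA m) :
    Srl r l (Srl r' l' f) = Srl r' l' (Srl r l f) := by
  simp only [Srl_eq, map_sum, map_smul, Finset.smul_sum]
  rw [Finset.sum_comm]
  refine Finset.sum_congr rfl fun _ _ => Finset.sum_congr rfl fun _ _ => ?_
  rw [contr_comm, smul_comm]

/-- `E_{r,l}` acts on the two legs of a contraction: it raises the `q`-index with `r` multiplied on
the left, and the `p`-index with `r` multiplied on the right. -/
theorem Erl_contr {m : ℕ} (r M : Matrix (Fin m) (Fin m) ℂ) (l i j : ℕ) (f : PolyA m) :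
    Erl r l (contr M i j f) = contr M i j (Erl r l f) +
      (-1 : ℂ) ^ l • contr (r * M) (i + l) j f - contr (M * r) i (j + l) f := by
  have h1 : contr (r * M) (i + l) j f = ∑ κ : Fin m, ∑ lam : Fin m, M κ lam •
      ∑ ν : Fin m, r ν κ • pderiv (.inr (i + l, ν)) (pderiv (.inl (j, lam)) f) := by
    simp only [contr_apply, Matrix.mul_apply, Finset.sum_smul, Finset.smul_sum, smul_smul]
    rw [Finset.sum_comm_cycle]
    refine Finset.sum_congr rfl fun _ _ => ?_
    rw [Finset.sum_comm]
    simp only [mul_comm]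
  have h2 : contr (M * r) i (j + l) f = ∑ κ : Fin m, ∑ lam : Fin m, M κ lam •
      ∑ ν : Fin m, r lam ν • pderiv (.inr (i, κ)) (pderiv (.inl (j + l, ν)) f) := by
    simp only [contr_apply, Matrix.mul_apply, Finset.sum_smul, Finset.smul_sum, smul_smul]
    refine Finset.sum_congr rfl fun _ _ => ?_
    rw [Finset.sum_comm]
  rw [h1, h2]
  simp only [contr_apply, map_sum, Derivation.map_smul, Erl_pderiv_inr, Erl_pderiv_inl, map_sub,
    smul_add, smul_sub, Finset.sum_add_distrib, Finset.sum_sub_distrib]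
  rw [Finset.smul_sum]
  simp only [Finset.smul_sum (r := (-1 : ℂ) ^ l), smul_comm ((-1 : ℂ) ^ l)]
  abel

/-- `[E_{r,l}, S_{r',l'}]`, with the `p`-indices written so that both sums are pieces of the
contractions occurring in `S_{·,l+l'}`. -/
theorem Erl_Srl {m : ℕ} (r r' : Matrix (Fin m) (Fin m) ℂ) (l l' : ℕ) (f : PolyA m) :
    Erl r l (Srl r' l' f) - Srl r' l' (Erl r l f) =
      ∑ i ∈ Finset.range l', (-1 : ℂ) ^ (l + i + 1) • contr (r * r') (l + i) (l + l' - 1 - (l + i)) f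
      - ∑ i ∈ Finset.range l', (-1 : ℂ) ^ (i + 1) • contr (r' * r) i (l + l' - 1 - i) f := by
  simp only [Srl_eq, map_sum, Derivation.map_smul, Erl_contr]
  rw [← Finset.sum_sub_distrib, ← Finset.sum_sub_distrib]
  refine Finset.sum_congr rfl fun i hi => ?_
  have hi' := Finset.mem_range.mp hi
  have e1 : l + l' - 1 - (l + i) = l' - 1 - i := by omega
  have e2 : l + l' - 1 - i = l' - 1 - i + l := by omega
  have e3 : (-1 : ℂ) ^ (l + i + 1) = (-1) ^ (i + 1) * (-1) ^ l := by ring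
  rw [e1, e2, e3, add_comm l i, mul_smul]
  simp only [smul_sub, smul_add]
  abel

/-- The assignment `r·z^{l} ↦ r̂(r,l)` is a Lie algebra homomorphism:
`[r̂(r,l), r̂(r',l')] = r̂(r·r' − r'·r, l+l')`. -/
theorem rhat_commutator (m : ℕ) (r r' : Matrix (Fin m) (Fin m) ℂ)
    (l l' : ℕ) (hl : 1 ≤ l) (hl' : 1 ≤ l') :
    ∀ f : PolyA m,
      rhat r l (rhat r' l' f) - rhat r' l' (rhat r l f)
        = rhat (r * r' - r' * r) (l + l') f := by
  intro f
  have hE : Erl r l (Erl r' l' f) - Erl r' l' (Erl r l f) =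
      Erl (r * r' - r' * r) (l + l') f := by
    rw [← Erl_lie, Derivation.commutator_apply]
  -- The `r * r'` terms cover `[l, l + l')` in one commutator and `[0, l)` in the other;
  -- the `r' * r` terms split at `l'` instead.
  have hS : Srl (r * r' - r' * r) (l + l') f =
      (Erl r l (Srl r' l' f) - Srl r' l' (Erl r l f)) -
        (Erl r' l' (Srl r l f) - Srl r l (Erl r' l' f)) := by
    rw [Erl_Srl, Erl_Srl, Srl_eq]
    simp only [contr_sub, smul_sub, Finset.sum_sub_distrib]
    rw [Finset.sum_range_add]
    rw [add_comm l l', Finset.sum_range_add _ l' l]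
    abel
  simp only [rhat, map_add, Srl_add]
  rw [← hE, hS, Srl_comm r r']
  abel
end
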